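/- Assume the gain conditions: λ_min(K_s) ≥ 1 + k_{n2}·(k_θ·ρ̄₃·N·λ_d)², α₂·k·m₁ ≥ α₂ + k_{n2}·(k_θ·ρ̄₃·N·λ_d)² + k_{n3}·ρ₄(t)² for all t ≥ 0, min{α₁, α₃} ≥ 1, k_{n2} > 1/(4·k_θ·λ̲) and k_{n3} > 1/(4·min{α₁, α₂, α₃}). Then every solution of the closed-loop output-feedback system satisfies ‖v(t)‖ ≤ (λ₄/λ₃)^{1/2}·‖v(0)‖·exp(−(γ₁/λ₄)·t) for all t ≥ 0 and some constant γ₁ > 0, where v(t) = (e(t), e_f(t), η(t), θ̃(t)), λ₃ = (1/2)·min{λ_min(K_s), m₁, λ_min(Γ⁻¹)} and λ₄ = (1/2)·max{λ_max(K_s), m₂, λ_max(Γ⁻¹)}; in particular e(t) and θ̃(t) converge exponentially to zero. -/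

import Mathlib

open Matrix
open scoped BigOperators

/-- Euclidean norm of a vector in `Fin m → ℝ`. -/
noncomputable def eunorm {m : ℕ} (v : Fin m → ℝ) : ℝ :=
  Real.sqrt (∑ i, (v i) ^ 2)

theorem aux_eunorm_sq {m : ℕ} (v : Fin m → ℝ) : eunorm v ^ 2 = ∑ i, (v i) ^ 2 := by
  unfold eunorm
  exact Real.sq_sqrt (Finset.sum_nonneg fun i _ => sq_nonneg _)

theorem aux_eunorm_nonneg {m : ℕ} (v : Fin m → ℝ) : 0 ≤ eunorm v := Real.sqrt_nonneg _

theorem aux_cs {m : ℕ} (u v : Fin m → ℝ) : u ⬝ᵥ v ≤ eunorm u * eunorm v := by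
  unfold eunorm dotProduct
  exact Real.sum_mul_le_sqrt_mul_sqrt _ _ _

theorem aux_dot_deriv {m : ℕ} {u v : ℝ → Fin m → ℝ} {u' v' : Fin m → ℝ} {t : ℝ}
    (hu : HasDerivAt u u' t) (hv : HasDerivAt v v' t) :
    HasDerivAt (fun s => u s ⬝ᵥ v s) (u' ⬝ᵥ v t + u t ⬝ᵥ v') t := by
  have h := HasDerivAt.fun_sum (u := Finset.univ)
    (fun i _ => ((hasDerivAt_pi.1 hu) i).mul ((hasDerivAt_pi.1 hv) i))
  simp only [Finset.sum_add_distrib] at h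
  exact h

theorem aux_mulVec_deriv {m : ℕ} {A : ℝ → Matrix (Fin m) (Fin m) ℝ}
    {A' : Matrix (Fin m) (Fin m) ℝ} {v : ℝ → Fin m → ℝ} {v' : Fin m → ℝ} {t : ℝ}
    (hA : ∀ i j, HasDerivAt (fun s => A s i j) (A' i j) t) (hv : HasDerivAt v v' t) :
    HasDerivAt (fun s => (A s).mulVec (v s)) (A'.mulVec (v t) + (A t).mulVec v') t := by
  rw [hasDerivAt_pi]
  intro i
  have h := HasDerivAt.fun_sum (u := Finset.univ)
    (fun j _ => (hA i j).mul ((hasDerivAt_pi.1 hv) j))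
  simp only [Finset.sum_add_distrib] at h
  exact h

theorem aux_symm {m : ℕ} {A : Matrix (Fin m) (Fin m) ℝ} (hA : Aᵀ = A) (x y : Fin m → ℝ) :
    x ⬝ᵥ A.mulVec y = y ⬝ᵥ A.mulVec x := by
  rw [Matrix.dotProduct_mulVec, ← Matrix.mulVec_transpose, hA, dotProduct_comm]

theorem aux_quad_deriv {m : ℕ} {A : ℝ → Matrix (Fin m) (Fin m) ℝ}
    {A' : Matrix (Fin m) (Fin m) ℝ} {v : ℝ → Fin m → ℝ} {v' : Fin m → ℝ} {t : ℝ}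
    (hA : ∀ i j, HasDerivAt (fun s => A s i j) (A' i j) t) (hv : HasDerivAt v v' t)
    (hs : (A t)ᵀ = A t) :
    HasDerivAt (fun s => v s ⬝ᵥ (A s).mulVec (v s))
      (v t ⬝ᵥ A'.mulVec (v t) + 2 * (v t ⬝ᵥ (A t).mulVec v')) t := by
  have h := aux_dot_deriv hv (aux_mulVec_deriv hA hv)
  rw [aux_symm hs v' (v t), dotProduct_add] at h
  convert h using 1
  ring

theorem aux_diag_deriv {m : ℕ} (d : Fin m → ℝ) {v : ℝ → Fin m → ℝ} {v' : Fin m → ℝ} {t : ℝ}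
    (hv : HasDerivAt v v' t) :
    HasDerivAt (fun s => v s ⬝ᵥ (Matrix.diagonal d).mulVec (v s))
      (2 * (v t ⬝ᵥ (Matrix.diagonal d).mulVec v')) t := by
  have h := aux_quad_deriv (A := fun _ => Matrix.diagonal d) (A' := 0)
    (fun i j => hasDerivAt_const t _) hv (Matrix.diagonal_transpose d)
  simpa using h

theorem aux_diag_lower {m : ℕ} (d v : Fin m → ℝ) (c : ℝ) (h : ∀ i, c ≤ d i) :
    c * eunorm v ^ 2 ≤ v ⬝ᵥ (Matrix.diagonal d).mulVec v := by
  rw [aux_eunorm_sq, Finset.mul_sum]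
  unfold dotProduct
  refine Finset.sum_le_sum fun i _ => ?_
  rw [Matrix.mulVec_diagonal]
  nlinarith [mul_le_mul_of_nonneg_right (h i) (sq_nonneg (v i))]

theorem aux_diag_upper {m : ℕ} (d v : Fin m → ℝ) (c : ℝ) (h : ∀ i, d i ≤ c) :
    v ⬝ᵥ (Matrix.diagonal d).mulVec v ≤ c * eunorm v ^ 2 := by
  rw [aux_eunorm_sq, Finset.mul_sum]
  unfold dotProduct
  refine Finset.sum_le_sum fun i _ => ?_
  rw [Matrix.mulVec_diagonal]
  nlinarith [mul_le_mul_of_nonneg_right (h i) (sq_nonneg (v i))]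

theorem aux_gronwall {V V' : ℝ → ℝ} {c : ℝ} (hV : ∀ t, 0 ≤ t → HasDerivAt V (V' t) t)
    (hb : ∀ t, 0 ≤ t → V' t ≤ -c * V t) (t : ℝ) (ht : 0 ≤ t) :
    V t ≤ V 0 * Real.exp (-c * t) := by
  have hd : ∀ s, 0 ≤ s → HasDerivAt (fun s => V s * Real.exp (c * s))
      (V' s * Real.exp (c * s) + V s * (Real.exp (c * s) * c)) s := by
    intro s hs
    have h1 : HasDerivAt (fun s : ℝ => c * s) c s := by
      simpa using (hasDerivAt_id s).const_mul c
    exact (hV s hs).mul h1.exp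
  have ha : AntitoneOn (fun s => V s * Real.exp (c * s)) (Set.Ici 0) := by
    apply antitoneOn_of_deriv_nonpos (convex_Ici 0)
    · exact fun s hs => (hd s hs).continuousAt.continuousWithinAt
    · intro s hs
      rw [interior_Ici] at hs
      exact (hd s (le_of_lt hs)).differentiableAt.differentiableWithinAt
    · intro s hs
      rw [interior_Ici] at hs
      rw [(hd s (le_of_lt hs)).deriv]
      have h2 := mul_le_mul_of_nonneg_right (hb s (le_of_lt hs)) (Real.exp_pos (c * s)).le
      linarith
  have h := ha (Set.mem_Ici.2 le_rfl) (Set.mem_Ici.2 ht) ht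
  simp only [mul_zero, Real.exp_zero, mul_one] at h
  have h3 := mul_le_mul_of_nonneg_right h (Real.exp_pos (-c * t)).le
  rw [mul_assoc, ← Real.exp_add] at h3
  simpa using h3

theorem aux_young {c x y : ℝ} (hc : 0 < c) : x * y ≤ c * x ^ 2 + y ^ 2 / (4 * c) := by
  have h : c * x ^ 2 + y ^ 2 / (4 * c) - x * y = (2 * c * x - y) ^ 2 / (4 * c) := by
    field_simp
    ring
  have : 0 ≤ (2 * c * x - y) ^ 2 / (4 * c) := by positivity
  linarith

/-- The purely scalar part of the Lyapunov estimate. -/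
theorem aux_scalar {α₁ α₂ α₃ km kθ lam kn2 kn3 r b E F H T EK FK HM HX TO TS c3 : ℝ}
    (hα₁ : 1 ≤ α₁) (hα₃ : 1 ≤ α₃)
    (hkθ : 0 < kθ) (hkn2 : 0 < kn2) (hkn3 : 0 < kn3)
    (hH : 0 ≤ H) (hT : 0 ≤ T)
    (hr : α₂ + kn2 * (kθ * b) ^ 2 + kn3 * r ^ 2 ≤ km)
    (hEK : (1 + kn2 * (kθ * b) ^ 2) * E ^ 2 ≤ EK)
    (hFK : (1 + kn2 * (kθ * b) ^ 2) * F ^ 2 ≤ FK)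
    (hHM : km * H ^ 2 ≤ HM)
    (hHX : HX ≤ H * (r * √(E ^ 2 + F ^ 2 + H ^ 2)))
    (hTO : -TO ≤ T * (b * √(E ^ 2 + F ^ 2 + H ^ 2)))
    (hTS : lam * T ^ 2 ≤ TS)
    (h1 : c3 ≤ α₁) (h2 : c3 ≤ α₂) (h3 : c3 ≤ α₃) :
    -α₁ * EK - α₃ * FK - HM + HX - kθ * TO - kθ * TS ≤
      -(c3 - 1 / (4 * kn3)) * (E ^ 2 + F ^ 2 + H ^ 2) - (kθ * lam - 1 / (4 * kn2)) * T ^ 2 := by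
  have hZ : 0 ≤ E ^ 2 + F ^ 2 + H ^ 2 := by positivity
  have hs := Real.sq_sqrt hZ
  set Z := √(E ^ 2 + F ^ 2 + H ^ 2)
  have y1 := aux_young (c := kn3) (x := r * H) (y := Z) hkn3
  have y2 := aux_young (c := kn2) (x := kθ * b * Z) (y := T) hkn2
  set B := kn2 * (kθ * b) ^ 2 with hB
  have hB0 : 0 ≤ B := by positivity
  have y2' : kθ * b * Z * T ≤ B * (E ^ 2 + F ^ 2 + H ^ 2) + 1 / (4 * kn2) * T ^ 2 := by
    rw [← hs, hB]; convert y2 using 1; ring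
  have y1' : r * H * Z ≤ kn3 * r ^ 2 * H ^ 2 + 1 / (4 * kn3) * (E ^ 2 + F ^ 2 + H ^ 2) := by
    rw [← hs]; convert y1 using 1; ring
  have a1 : (c3 + B) * E ^ 2 ≤ α₁ * EK := by
    have q1 := mul_le_mul_of_nonneg_left hEK (by linarith : 0 ≤ α₁)
    have q2 : (c3 + B) * E ^ 2 ≤ (α₁ * (1 + B)) * E ^ 2 :=
      mul_le_mul_of_nonneg_right (by nlinarith) (sq_nonneg _)
    linarith
  have a3 : (c3 + B) * F ^ 2 ≤ α₃ * FK := by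
    have q1 := mul_le_mul_of_nonneg_left hFK (by linarith : 0 ≤ α₃)
    have q2 : (c3 + B) * F ^ 2 ≤ (α₃ * (1 + B)) * F ^ 2 :=
      mul_le_mul_of_nonneg_right (by nlinarith) (sq_nonneg _)
    linarith
  have a2 : (c3 + B + kn3 * r ^ 2) * H ^ 2 ≤ HM :=
    (mul_le_mul_of_nonneg_right (by linarith) (sq_nonneg _)).trans hHM
  have a4 := mul_le_mul_of_nonneg_left hTO hkθ.le
  have a5 := mul_le_mul_of_nonneg_left hTS hkθ.le
  linarith

/-- Theorem 2, output-feedback gradient adaptation based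
concurrent learning. Under the stated gain conditions, every solution of the
closed-loop output-feedback system satisfies
`‖v(t)‖ ≤ √(λ₄/λ₃) ‖v(0)‖ exp(-(γ₁/λ₄) t)` for all `t ≥ 0` and some constant
`γ₁ > 0`, where `v = (e, e_f, η, θ̃)`,
`λ₃ = ½ min{λmin(Ks), m₁, λmin(Γ⁻¹)}` and `λ₄ = ½ max{λmax(Ks), m₂, λmax(Γ⁻¹)}`;
in particular `e` and `θ̃` converge exponentially to zero. -/
theorem ofb_gradient_concurrent_learning_exponential_convergence
    {n p N : ℕ} [NeZero n] [NeZero p]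
    -- constants
    (α₁ α₂ α₃ k kθ m₁ m₂ lam lamd ρbar₃ kn2 kn3 : ℝ)
    (hα₁ : 0 < α₁) (hα₂ : 0 < α₂) (hα₃ : 0 < α₃) (hk : 0 < k)
    (hkθ : 0 < kθ) (hm₁ : 0 < m₁) (hm₁₂ : m₁ ≤ m₂)
    (hlam : 0 < lam) (hlamd : 0 ≤ lamd) (hρbar₃ : 0 ≤ ρbar₃)
    (hkn2 : 0 < kn2) (hkn3 : 0 < kn3)
    -- diagonal positive definite gain matrices `Ks = diagonal ks`, `Γ = diagonal g`
    (ks : Fin n → ℝ) (g : Fin p → ℝ)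
    (hks : ∀ i, 0 < ks i) (hg : ∀ i, 0 < g i)
    -- state error signals and their derivatives
    (e ef η e' ef' η' : ℝ → Fin n → ℝ)
    (θtil θtil' : ℝ → Fin p → ℝ)
    (he : ∀ t, 0 ≤ t → HasDerivAt e (e' t) t)
    (hef : ∀ t, 0 ≤ t → HasDerivAt ef (ef' t) t)
    (hη : ∀ t, 0 ≤ t → HasDerivAt η (η' t) t)
    (hθ : ∀ t, 0 ≤ t → HasDerivAt θtil (θtil' t) t)
    -- surrogate filter relations: ė = η - α₁ e - α₂ e_f, ė_f = -α₃ e_f + α₂ e - k η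
    (hedyn : ∀ t, 0 ≤ t → e' t = η t - α₁ • e t - α₂ • ef t)
    (hefdyn : ∀ t, 0 ≤ t → ef' t = -α₃ • ef t + α₂ • e t - k • η t)
    -- inertia matrix, its derivative, and centripetal-Coriolis matrix
    (M M' C : ℝ → Matrix (Fin n) (Fin n) ℝ)
    (hM : ∀ t, 0 ≤ t → ∀ i j, HasDerivAt (fun s => M s i j) (M' t i j) t)
    (hMsymm : ∀ t, 0 ≤ t → (M t).IsHermitian)
    (hMlower : ∀ t, 0 ≤ t → ∀ ξ : Fin n → ℝ,
      m₁ * (eunorm ξ) ^ 2 ≤ ξ ⬝ᵥ (M t).mulVec ξ)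
    (hMupper : ∀ t, 0 ≤ t → ∀ ξ : Fin n → ℝ,
      ξ ⬝ᵥ (M t).mulVec ξ ≤ m₂ * (eunorm ξ) ^ 2)
    -- skew-symmetry property: ξᵀ(Ṁ - 2C)ξ = 0
    (hskew : ∀ t, 0 ≤ t → ∀ ξ : Fin n → ℝ,
      ξ ⬝ᵥ (M' t - (2 : ℝ) • C t).mulVec ξ = 0)
    -- desired regression matrix
    (Yd : ℝ → Matrix (Fin n) (Fin p) ℝ) (hYd : Continuous Yd)
    -- auxiliary term χ with its bound ‖χ(t)‖ ≤ ρ₄(t) ‖z(t)‖, z = (e, e_f, η)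
    (χ : ℝ → Fin n → ℝ) (ρ₄ : ℝ → ℝ) (hρ₄ : ∀ t, 0 ≤ ρ₄ t)
    (hχ : ∀ t, 0 ≤ t → eunorm (χ t) ≤
      ρ₄ t * Real.sqrt ((eunorm (e t)) ^ 2 + (eunorm (ef t)) ^ 2 + (eunorm (η t)) ^ 2))
    -- concurrent-learning data stack
    (𝒴 : Fin N → Matrix (Fin n) (Fin p) ℝ)
    (Ω : Fin N → ℝ → Fin n → ℝ)
    -- bound ‖Σᵢ 𝒴ᵢᵀ Ωᵢ(t)‖ ≤ N λd ρ̄₃ ‖z(t)‖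
    (hΩ : ∀ t, 0 ≤ t →
      eunorm (∑ i, ((𝒴 i)ᵀ).mulVec (Ω i t)) ≤ (N : ℝ) * lamd * ρbar₃ *
        Real.sqrt ((eunorm (e t)) ^ 2 + (eunorm (ef t)) ^ 2 + (eunorm (η t)) ^ 2))
    -- λmin(Σᵢ 𝒴ᵢᵀ 𝒴ᵢ) ≥ λ̲ > 0
    (hstack : ∀ ξ : Fin p → ℝ,
      lam * (eunorm ξ) ^ 2 ≤ ξ ⬝ᵥ (∑ i, (𝒴 i)ᵀ * 𝒴 i).mulVec ξ)
    -- closed-loop dynamics: M η̇ = -C η - α₂ k M η + Y_d θ̃ + χ + k Ks e_f - Ks e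
    (hηdyn : ∀ t, 0 ≤ t → (M t).mulVec (η' t) =
      -((C t).mulVec (η t)) - (α₂ * k) • ((M t).mulVec (η t))
        + (Yd t).mulVec (θtil t) + χ t
        + k • ((Matrix.diagonal ks).mulVec (ef t))
        - (Matrix.diagonal ks).mulVec (e t))
    -- parameter-estimation-error dynamics
    (hθdyn : ∀ t, 0 ≤ t → θtil' t =
      -((Matrix.diagonal g).mulVec (((Yd t)ᵀ).mulVec (η t)))
        - kθ • ((Matrix.diagonal g).mulVec (∑ i, ((𝒴 i)ᵀ).mulVec (Ω i t)))
        - kθ • ((Matrix.diagonal g).mulVec ((∑ i, (𝒴 i)ᵀ * 𝒴 i).mulVec (θtil t))))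
    -- gain conditions
    (hgainKs : (⨅ i, ks i) ≥ 1 + kn2 * (kθ * ρbar₃ * (N : ℝ) * lamd) ^ 2)
    (hgaink : ∀ t, 0 ≤ t →
      α₂ * k * m₁ ≥ α₂ + kn2 * (kθ * ρbar₃ * (N : ℝ) * lamd) ^ 2 + kn3 * (ρ₄ t) ^ 2)
    (hα₁₃ : min α₁ α₃ ≥ 1)
    (hgain2 : kn2 > 1 / (4 * kθ * lam))
    (hgain3 : kn3 > 1 / (4 * min α₁ (min α₂ α₃))) :
    -- ∃ γ₁ > 0 with ‖v(t)‖ ≤ √(λ₄/λ₃) ‖v(0)‖ exp(-(γ₁/λ₄) t)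
    ∃ γ₁ : ℝ, 0 < γ₁ ∧
      ∀ t, 0 ≤ t →
        Real.sqrt ((eunorm (e t)) ^ 2 + (eunorm (ef t)) ^ 2 + (eunorm (η t)) ^ 2 +
            (eunorm (θtil t)) ^ 2) ≤
          Real.sqrt
              ((1 / 2 * max (⨆ i, ks i) (max m₂ (⨆ i, (g i)⁻¹))) /
                (1 / 2 * min (⨅ i, ks i) (min m₁ (⨅ i, (g i)⁻¹)))) *
            Real.sqrt ((eunorm (e 0)) ^ 2 + (eunorm (ef 0)) ^ 2 + (eunorm (η 0)) ^ 2 +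
              (eunorm (θtil 0)) ^ 2) *
            Real.exp
              (-(γ₁ / (1 / 2 * max (⨆ i, ks i) (max m₂ (⨆ i, (g i)⁻¹)))) * t) := by
  set L4 := 1 / 2 * max (⨆ i, ks i) (max m₂ (⨆ i, (g i)⁻¹)) with hL4
  set L3 := 1 / 2 * min (⨅ i, ks i) (min m₁ (⨅ i, (g i)⁻¹)) with hL3
  have hkinf : ∀ i, (⨅ i, ks i) ≤ ks i := fun i => ciInf_le (Set.finite_range ks).bddBelow i
  have hksup : ∀ i, ks i ≤ (⨆ i, ks i) := fun i => le_ciSup (Set.finite_range ks).bddAbove i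
  have hginf : ∀ i, (⨅ i, (g i)⁻¹) ≤ (g i)⁻¹ :=
    fun i => ciInf_le (Set.finite_range fun i => (g i)⁻¹).bddBelow i
  have hgsup : ∀ i, (g i)⁻¹ ≤ (⨆ i, (g i)⁻¹) :=
    fun i => le_ciSup (Set.finite_range fun i => (g i)⁻¹).bddAbove i
  have hkpos : 0 < ⨅ i, ks i := by
    have : 0 ≤ kn2 * (kθ * ρbar₃ * (N : ℝ) * lamd) ^ 2 := by positivity
    linarith
  have hgpos : 0 < ⨅ i, (g i)⁻¹ := by
    obtain ⟨i, hi⟩ := exists_eq_ciInf_of_finite (f := fun i => (g i)⁻¹)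
    rw [← hi]
    exact inv_pos.2 (hg i)
  have hL3pos : 0 < L3 := by
    have : 0 < min (⨅ i, ks i) (min m₁ (⨅ i, (g i)⁻¹)) := lt_min hkpos (lt_min hm₁ hgpos)
    rw [hL3]; linarith
  have hm₂ : 0 < m₂ := by linarith
  have u2 : m₂ ≤ 2 * L4 := by
    rw [hL4]
    have := (le_max_left m₂ (⨆ i, (g i)⁻¹)).trans (le_max_right (⨆ i, ks i) _)
    linarith
  have u1 : (⨆ i, ks i) ≤ 2 * L4 := by
    rw [hL4]
    have := le_max_left (⨆ i, ks i) (max m₂ (⨆ i, (g i)⁻¹))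
    linarith
  have u3 : (⨆ i, (g i)⁻¹) ≤ 2 * L4 := by
    rw [hL4]
    have := (le_max_right m₂ (⨆ i, (g i)⁻¹)).trans (le_max_right (⨆ i, ks i) _)
    linarith
  have l2 : 2 * L3 ≤ m₁ := by
    rw [hL3]
    have := (min_le_right (⨅ i, ks i) (min m₁ (⨅ i, (g i)⁻¹))).trans (min_le_left _ _)
    linarith
  have l1 : 2 * L3 ≤ (⨅ i, ks i) := by
    rw [hL3]
    have := min_le_left (⨅ i, ks i) (min m₁ (⨅ i, (g i)⁻¹))
    linarith
  have l3 : 2 * L3 ≤ (⨅ i, (g i)⁻¹) := by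
    rw [hL3]
    have := (min_le_right (⨅ i, ks i) (min m₁ (⨅ i, (g i)⁻¹))).trans (min_le_right _ _)
    linarith
  have hL4pos : 0 < L4 := by linarith
  clear_value L3 L4
  set c3 := min α₁ (min α₂ α₃) with hc3
  have c1 : c3 ≤ α₁ := min_le_left _ _
  have c2 : c3 ≤ α₂ := (min_le_right _ _).trans (min_le_left _ _)
  have c4 : c3 ≤ α₃ := (min_le_right _ _).trans (min_le_right _ _)
  have hc3pos : 0 < c3 := lt_min hα₁ (lt_min hα₂ hα₃)
  clear_value c3
  have g3 : 0 < c3 - 1 / (4 * kn3) := by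
    have h : 1 < kn3 * (4 * c3) := (div_lt_iff₀ (by positivity)).1 hgain3
    have : 1 / (4 * kn3) < c3 := (div_lt_iff₀ (by positivity)).2 (by linarith)
    linarith
  have g2 : 0 < kθ * lam - 1 / (4 * kn2) := by
    have h : 1 < kn2 * (4 * kθ * lam) := (div_lt_iff₀ (by positivity)).1 hgain2
    have : 1 / (4 * kn2) < kθ * lam := (div_lt_iff₀ (by positivity)).2 (by linarith)
    linarith
  obtain ⟨γ, hγ, γ1, γ2⟩ : ∃ γ, 0 < γ ∧ γ ≤ c3 - 1 / (4 * kn3) ∧ γ ≤ kθ * lam - 1 / (4 * kn2) :=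
    ⟨_, lt_min g3 g2, min_le_left _ _, min_le_right _ _⟩
  -- Lyapunov function
  let V : ℝ → ℝ := fun t => 1 / 2 * (e t ⬝ᵥ (Matrix.diagonal ks).mulVec (e t)
    + ef t ⬝ᵥ (Matrix.diagonal ks).mulVec (ef t) + η t ⬝ᵥ (M t).mulVec (η t)
    + θtil t ⬝ᵥ (Matrix.diagonal fun i => (g i)⁻¹).mulVec (θtil t))
  let V' : ℝ → ℝ := fun t => 1 / 2 * (2 * (e t ⬝ᵥ (Matrix.diagonal ks).mulVec (e' t))
    + 2 * (ef t ⬝ᵥ (Matrix.diagonal ks).mulVec (ef' t))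
    + (η t ⬝ᵥ (M' t).mulVec (η t) + 2 * (η t ⬝ᵥ (M t).mulVec (η' t)))
    + 2 * (θtil t ⬝ᵥ (Matrix.diagonal fun i => (g i)⁻¹).mulVec (θtil' t)))
  let W : ℝ → ℝ := fun t => eunorm (e t) ^ 2 + eunorm (ef t) ^ 2 + eunorm (η t) ^ 2 +
    eunorm (θtil t) ^ 2
  have hVd : ∀ t, 0 ≤ t → HasDerivAt V (V' t) t := by
    intro t ht
    have hs : (M t)ᵀ = M t := by
      have := hMsymm t ht
      rwa [Matrix.IsHermitian, Matrix.conjTranspose_eq_transpose_of_trivial] at this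
    exact ((((aux_diag_deriv ks (he t ht)).add (aux_diag_deriv ks (hef t ht))).add
      (aux_quad_deriv (hM t ht) (hη t ht) hs)).add
        (aux_diag_deriv (fun i => (g i)⁻¹) (hθ t ht))).const_mul (1 / 2)
  have hVup : ∀ t, 0 ≤ t → V t ≤ L4 * W t := by
    intro t ht
    have b1 := aux_diag_upper ks (e t) (2 * L4) fun i => (hksup i).trans u1
    have b2 := aux_diag_upper ks (ef t) (2 * L4) fun i => (hksup i).trans u1
    have b3 := (hMupper t ht (η t)).trans (mul_le_mul_of_nonneg_right u2 (sq_nonneg _))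
    have b4 := aux_diag_upper (fun i => (g i)⁻¹) (θtil t) (2 * L4) fun i => (hgsup i).trans u3
    simp only [V, W]
    linarith
  have hVlo : ∀ t, 0 ≤ t → L3 * W t ≤ V t := by
    intro t ht
    have b1 := aux_diag_lower ks (e t) (2 * L3) fun i => l1.trans (hkinf i)
    have b2 := aux_diag_lower ks (ef t) (2 * L3) fun i => l1.trans (hkinf i)
    have b3 := (mul_le_mul_of_nonneg_right l2 (sq_nonneg _)).trans (hMlower t ht (η t))
    have b4 := aux_diag_lower (fun i => (g i)⁻¹) (θtil t) (2 * L3) fun i => l3.trans (hginf i)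
    simp only [V, W]
    linarith
  have hVb : ∀ t, 0 ≤ t → V' t ≤ -γ * W t := by
    intro t ht
    have hKs := aux_symm (Matrix.diagonal_transpose ks)
    have hGi : ∀ w : Fin p → ℝ, (Matrix.diagonal fun i => (g i)⁻¹).mulVec
        ((Matrix.diagonal g).mulVec w) = w := by
      intro w
      ext i
      rw [Matrix.mulVec_diagonal, Matrix.mulVec_diagonal]
      exact inv_mul_cancel_left₀ (hg i).ne' _
    have hY : θtil t ⬝ᵥ ((Yd t)ᵀ).mulVec (η t) = η t ⬝ᵥ (Yd t).mulVec (θtil t) := by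
      rw [Matrix.dotProduct_mulVec, Matrix.vecMul_transpose, dotProduct_comm]
    have hsk := hskew t ht (η t)
    rw [Matrix.sub_mulVec, Matrix.smul_mulVec, dotProduct_sub, dotProduct_smul,
      smul_eq_mul] at hsk
    have heq : V' t = -α₁ * (e t ⬝ᵥ (Matrix.diagonal ks).mulVec (e t))
        - α₃ * (ef t ⬝ᵥ (Matrix.diagonal ks).mulVec (ef t))
        - α₂ * k * (η t ⬝ᵥ (M t).mulVec (η t)) + η t ⬝ᵥ χ t
        - kθ * (θtil t ⬝ᵥ ∑ i, ((𝒴 i)ᵀ).mulVec (Ω i t))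
        - kθ * (θtil t ⬝ᵥ (∑ i, (𝒴 i)ᵀ * 𝒴 i).mulVec (θtil t)) := by
      simp only [V']
      rw [hηdyn t ht, hedyn t ht, hefdyn t ht, hθdyn t ht]
      simp only [Matrix.mulVec_add, Matrix.mulVec_sub, Matrix.mulVec_neg, Matrix.mulVec_smul,
        hGi, dotProduct_add, dotProduct_sub, dotProduct_neg, dotProduct_smul, smul_eq_mul, hY]
      rw [hKs (ef t) (e t), hKs (η t) (e t), hKs (η t) (ef t)]
      linear_combination (1 / 2) * hsk
    have hTO : -(θtil t ⬝ᵥ ∑ i, ((𝒴 i)ᵀ).mulVec (Ω i t)) ≤ eunorm (θtil t) *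
        ((N : ℝ) * lamd * ρbar₃ *
        Real.sqrt ((eunorm (e t)) ^ 2 + (eunorm (ef t)) ^ 2 + (eunorm (η t)) ^ 2)) := by
      have h := aux_cs (-θtil t) (∑ i, ((𝒴 i)ᵀ).mulVec (Ω i t))
      have hn : eunorm (-θtil t) = eunorm (θtil t) := by simp [eunorm]
      rw [neg_dotProduct, hn] at h
      exact h.trans (mul_le_mul_of_nonneg_left (hΩ t ht) (aux_eunorm_nonneg _))
    have hHX := (aux_cs (η t) (χ t)).trans
      (mul_le_mul_of_nonneg_left (hχ t ht) (aux_eunorm_nonneg _))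
    have hbb : kθ * ρbar₃ * (N : ℝ) * lamd = kθ * ((N : ℝ) * lamd * ρbar₃) := by ring
    have hr := hgaink t ht
    rw [hbb] at hr hgainKs
    have key := aux_scalar (hα₁₃.le.trans (min_le_left _ _)) (hα₁₃.le.trans (min_le_right _ _))
      hkθ hkn2 hkn3 (aux_eunorm_nonneg (η t)) (aux_eunorm_nonneg (θtil t)) hr
      (aux_diag_lower ks (e t) _ fun i => hgainKs.le.trans (hkinf i))
      (aux_diag_lower ks (ef t) _ fun i => hgainKs.le.trans (hkinf i))
      (HM := α₂ * k * (η t ⬝ᵥ (M t).mulVec (η t)))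
      (by
        have := mul_le_mul_of_nonneg_left (hMlower t ht (η t)) (mul_pos hα₂ hk).le
        linarith)
      hHX hTO (hstack (θtil t)) c1 c2 c4
    rw [← heq] at key
    have k1 := mul_le_mul_of_nonneg_right γ1
      (by positivity : 0 ≤ eunorm (e t) ^ 2 + eunorm (ef t) ^ 2 + eunorm (η t) ^ 2)
    have k2 := mul_le_mul_of_nonneg_right γ2 (sq_nonneg (eunorm (θtil t)))
    simp only [W]
    linarith
  have hVc : ∀ t, 0 ≤ t → V' t ≤ -(γ / L4) * V t := by
    intro t ht
    have h1 := mul_le_mul_of_nonneg_left (hVup t ht) (div_pos hγ hL4pos).le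
    have h2 : γ / L4 * (L4 * W t) = γ * W t := by field_simp
    have h3 := hVb t ht
    linarith
  refine ⟨γ / 2, by positivity, fun t ht => ?_⟩
  have hG := aux_gronwall hVd hVc t ht
  have hW0 : 0 ≤ W 0 := by simp only [W]; positivity
  have hfin : W t ≤ L4 / L3 * W 0 * Real.exp (-(γ / L4) * t) := by
    have h1 := (hVlo t ht).trans (hG.trans
      (mul_le_mul_of_nonneg_right (hVup 0 le_rfl) (Real.exp_pos _).le))
    have h2 : L4 / L3 * W 0 * Real.exp (-(γ / L4) * t)
        = (L4 * W 0 * Real.exp (-(γ / L4) * t)) / L3 := by ring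
    rw [h2, le_div_iff₀ hL3pos]
    linarith
  have hexp : Real.exp (-(γ / L4) * t) = Real.exp (-(γ / 2 / L4) * t) ^ 2 := by
    rw [sq, ← Real.exp_add]
    congr 1
    ring
  change √(W t) ≤ √(L4 / L3) * √(W 0) * Real.exp (-(γ / 2 / L4) * t)
  apply Real.sqrt_le_iff.2
  refine ⟨by positivity, ?_⟩
  rw [mul_pow, mul_pow, Real.sq_sqrt hW0, Real.sq_sqrt (div_pos hL4pos hL3pos).le, ← hexp]
  exact hfin
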